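/- Let p be a propositional atom. Let (T⁻_KP)₀ be the smallest closed theory containing the schema V, the schema K, and the formula p ↔ K¬p, and let T⁻_KP be the union of (T⁻_KP)₀ with the schema T. Then T⁻_KP is consistent. -/

import Mathlib

/-!
The theory is satisfied at the root `r` of a two-world Kripke model. The root sees itself and a
second world `d`; the world `d` sees nothing. All atoms are true at `d` and false at `r`.
At `d` every `Kφ` holds vacuously, so `p ↔ K¬p` holds there with both sides true; at `r` both sides
are false because `p` holds at the visible world `d`. The formulas true at both worlds thus form a
closed theory containing V, K and `p ↔ K¬p`, and since `r` sees itself it also satisfies the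
schema T.
-/

/-- Formulas of propositional modal logic over atoms `A`. -/
inductive Formula (A : Type) : Type
  | atom : A → Formula A
  | neg : Formula A → Formula A
  | and : Formula A → Formula A → Formula A
  | or : Formula A → Formula A → Formula A
  | imp : Formula A → Formula A → Formula A
  | K : Formula A → Formula A

/-- A model assigns a truth value to each basic formula, i.e. to each
atom and to each formula of the form `K φ`. -/
structure Model (A : Type) where
  atomVal : A → Prop
  kVal : Formula A → Prop

/-- Truth of a formula in a model. -/
def Model.Sat {A : Type} (M : Model A) : Formula A → Prop
  | .atom a => M.atomVal a
  | .neg φ => ¬ M.Sat φ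
  | .and φ ψ => M.Sat φ ∧ M.Sat ψ
  | .or φ ψ => M.Sat φ ∨ M.Sat ψ
  | .imp φ ψ => M.Sat φ → M.Sat ψ
  | .K φ => M.kVal φ

/-- A model satisfies a theory if it satisfies each of its members. -/
def Model.SatTheory {A : Type} (M : Model A) (T : Set (Formula A)) : Prop :=
  ∀ φ ∈ T, M.Sat φ

/-- `T` entails `φ`: every model of `T` satisfies `φ`. -/
def Entails {A : Type} (T : Set (Formula A)) (φ : Formula A) : Prop :=
  ∀ M : Model A, M.SatTheory T → M.Sat φ

/-- `φ` is valid iff it is entailed by the empty theory. -/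
def Valid {A : Type} (φ : Formula A) : Prop := Entails ∅ φ

/-- A theory is closed if it contains `K φ` whenever it contains `φ`. -/
def TheoryClosed {A : Type} (T : Set (Formula A)) : Prop :=
  ∀ φ ∈ T, Formula.K φ ∈ T

/-- A theory is consistent iff some model satisfies it. -/
def Consistent {A : Type} (T : Set (Formula A)) : Prop :=
  ∃ M : Model A, M.SatTheory T

/-- The schema V: `K φ` for every valid `φ`. -/
def schemaV (A : Type) : Set (Formula A) :=
  { χ | ∃ φ, Valid φ ∧ χ = Formula.K φ }

/-- The schema K: all formulas `K(φ→ψ) → (Kφ → Kψ)`. -/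
def schemaK (A : Type) : Set (Formula A) :=
  { χ | ∃ φ ψ, χ = Formula.imp (Formula.K (Formula.imp φ ψ))
      (Formula.imp (Formula.K φ) (Formula.K ψ)) }

/-- The schema T: all formulas `Kφ → φ`. -/
def schemaT (A : Type) : Set (Formula A) :=
  { χ | ∃ φ, χ = Formula.imp (Formula.K φ) φ }

/-- The schema KK (a.k.a. 4): all formulas `Kφ → KKφ`. -/
def schemaKK (A : Type) : Set (Formula A) :=
  { χ | ∃ φ, χ = Formula.imp (Formula.K φ) (Formula.K (Formula.K φ)) }

/-- `φ ↔ ψ` abbreviates `(φ→ψ) ∧ (ψ→φ)`. -/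
def Formula.iffF {A : Type} (φ ψ : Formula A) : Formula A :=
  Formula.and (Formula.imp φ ψ) (Formula.imp ψ φ)

/-- The model `M_{T,S}`: atoms are true iff in `S`; `Kφ` true iff `T ⊨ φ`. -/
def canonModel {A : Type} (T : Set (Formula A)) (S : Set A) : Model A :=
  { atomVal := fun a => a ∈ S, kVal := fun φ => Entails T φ }

/-- `T` is generic iff for every set `S` of atoms and every theory `T' ⊇ T`,
`M_{T',S} ⊨ T`. -/
def Generic {A : Type} (T : Set (Formula A)) : Prop :=
  ∀ (S : Set A) (T' : Set (Formula A)), T ⊆ T' → (canonModel T' S).SatTheory T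

/-- `T` is closed generic iff for every set `S` of atoms and every closed
theory `T' ⊇ T`, `M_{T',S} ⊨ T`. -/
def ClosedGeneric {A : Type} (T : Set (Formula A)) : Prop :=
  ∀ (S : Set A) (T' : Set (Formula A)), TheoryClosed T' → T ⊆ T' →
    (canonModel T' S).SatTheory T

/-- The smallest closed theory containing `X`: the intersection of all
closed theories containing `X`. -/
def closedClosure {A : Type} (X : Set (Formula A)) : Set (Formula A) :=
  ⋂₀ { T | TheoryClosed T ∧ X ⊆ T }

/-- The dead-end world `d`: every atom and every `Kφ` is true. -/
def deadEnd (A : Type) : Model A :=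
  { atomVal := fun _ => True, kVal := fun _ => True }

/-- Truth at the root `r`, by recursion through `K` in the Kripke manner: `Kφ` is true iff `φ` is
true at both `d` and `r`. -/
def RootSat {A : Type} : Formula A → Prop
  | .atom _ => False
  | .neg φ => ¬ RootSat φ
  | .and φ ψ => RootSat φ ∧ RootSat ψ
  | .or φ ψ => RootSat φ ∨ RootSat ψ
  | .imp φ ψ => RootSat φ → RootSat ψ
  | .K φ => (deadEnd A).Sat φ ∧ RootSat φ

/-- The root world `r` as a `Model`. -/
def rootModel (A : Type) : Model A :=
  { atomVal := fun _ => False, kVal := fun φ => (deadEnd A).Sat φ ∧ RootSat φ }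

theorem rootModel_sat {A : Type} (φ : Formula A) : (rootModel A).Sat φ ↔ RootSat φ := by
  induction φ with
  | atom a => rfl
  | K φ _ => rfl
  | neg φ ih => simp [Model.Sat, RootSat, ih]
  | and φ ψ ih₁ ih₂ => simp [Model.Sat, RootSat, ih₁, ih₂]
  | or φ ψ ih₁ ih₂ => simp [Model.Sat, RootSat, ih₁, ih₂]
  | imp φ ψ ih₁ ih₂ => simp [Model.Sat, RootSat, ih₁, ih₂]

/-- the union of the smallest closed theory containing V, K,
and `p ↔ K¬p` with the schema T is consistent. -/
theorem statement3 (A : Type) [Nonempty A] (p : A) :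
    Consistent (closedClosure
      (schemaV A ∪ schemaK A ∪
        {Formula.iffF (Formula.atom p) (Formula.K (Formula.neg (Formula.atom p)))})
      ∪ schemaT A) := by
  refine ⟨rootModel A, ?_⟩
  rintro χ (hχ | ⟨φ, rfl⟩)
  · -- Minimality of the closure, applied to the closed theory of formulas true at both worlds.
    have h : χ ∈ {φ : Formula A | (deadEnd A).Sat φ ∧ RootSat φ} := by
      refine hχ _ ⟨fun φ hφ => ⟨trivial, hφ⟩, ?_⟩
      rintro ψ ((⟨φ, hφ, rfl⟩ | ⟨φ, ψ, rfl⟩) | rfl)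
      · exact ⟨trivial, hφ _ (fun _ h => h.elim),
          (rootModel_sat φ).1 (hφ _ (fun _ h => h.elim))⟩
      · exact ⟨fun _ _ => trivial, fun h₁ h₂ => ⟨h₁.1 h₂.1, h₁.2 h₂.2⟩⟩
      · exact ⟨⟨fun _ => trivial, fun _ => trivial⟩,
          ⟨fun h => h.elim, fun h => h.1 trivial⟩⟩
    exact (rootModel_sat χ).2 h.2
  · exact fun h => (rootModel_sat φ).2 h.2
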